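/- Let W: ℝ^d → ℝ ∪ {∞} be even, locally integrable, bounded below on compact sets, lower semicontinuous, continuous on ℝ^d∖{0} with W(0) = lim_{x→0} W(x), and suppose that for any R > 0 there are constants C_1(R), C_2(R) such that the average of W over any ball B(x;ε) with |x| < R, 0 < ε < 1 is at most C_1(R) + C_2(R) W(x). Let μ be a compactly supported signed measure with E[|μ|] < ∞, and let φ_ε be a standard radially decreasing mollifier supported in B(0;ε). Then lim_{ε→0} E[μ * φ_ε] = E[μ]. -/

import Mathlib

open MeasureTheory Real Filter Topology Metric Set
open scoped ENNReal

noncomputable section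
open Classical

def erealToENNReal (x : EReal) : ℝ≥0∞ :=
  if x = ⊤ then ⊤ else ENNReal.ofReal x.toReal

def ennrealToEReal (x : ℝ≥0∞) : EReal :=
  if x = ⊤ then ⊤ else ((x.toReal : ℝ) : EReal)

/-- The interaction energy of a (nonnegative) measure, valued in the extended reals. -/
def interactionEnergy {d : ℕ} (W : EuclideanSpace ℝ (Fin d) → EReal)
    (ρ : Measure (EuclideanSpace ℝ (Fin d))) : EReal :=
  (((2:ℝ)⁻¹ : ℝ) : EReal) *
    (ennrealToEReal (∫⁻ p, erealToENNReal (W (p.1 - p.2)) ∂(ρ.prod ρ))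
      - ennrealToEReal (∫⁻ p, erealToENNReal (-(W (p.1 - p.2))) ∂(ρ.prod ρ)))

/-- The interaction energy of a signed measure `μ` (expressed through its Jordan
decomposition `μ = μ⁺ - μ⁻`), as a real number:
`E[μ] = (1/2)(∬ W d(μ⁺×μ⁺) + ∬ W d(μ⁻×μ⁻) - 2∬ W d(μ⁺×μ⁻))`. -/
def signedEnergy {d : ℕ} (W : EuclideanSpace ℝ (Fin d) → EReal)
    (μ : SignedMeasure (EuclideanSpace ℝ (Fin d))) : ℝ :=
  (2:ℝ)⁻¹ *
    ((∫ p, (W (p.1 - p.2)).toReal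
        ∂((μ.toJordanDecomposition.posPart).prod (μ.toJordanDecomposition.posPart)))
      + (∫ p, (W (p.1 - p.2)).toReal
        ∂((μ.toJordanDecomposition.negPart).prod (μ.toJordanDecomposition.negPart)))
      - 2 * ∫ p, (W (p.1 - p.2)).toReal
        ∂((μ.toJordanDecomposition.posPart).prod (μ.toJordanDecomposition.negPart)))

/-- The interaction energy `(1/2)∬ W(x-y) f(x) f(y) dx dy` of a density `f`. -/
def densityEnergy {d : ℕ} (W : EuclideanSpace ℝ (Fin d) → EReal)
    (f : EuclideanSpace ℝ (Fin d) → ℝ) : ℝ :=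
  (2:ℝ)⁻¹ * ∫ p : EuclideanSpace ℝ (Fin d) × EuclideanSpace ℝ (Fin d),
    (W (p.1 - p.2)).toReal * f p.1 * f p.2

/-- The mollification `μ * φ_ε` of the signed measure `μ`, where
`φ_ε(x) = ε^{-d} φ(x/ε)`, as a function on `ℝ^d`. -/
def mollifiedSigned {d : ℕ} (φ : EuclideanSpace ℝ (Fin d) → ℝ)
    (μ : SignedMeasure (EuclideanSpace ℝ (Fin d))) (ε : ℝ)
    (x : EuclideanSpace ℝ (Fin d)) : ℝ :=
  (∫ y, ε ^ (-(d:ℝ)) * φ (ε⁻¹ • (x - y)) ∂μ.toJordanDecomposition.posPart)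
    - ∫ y, ε ^ (-(d:ℝ)) * φ (ε⁻¹ • (x - y)) ∂μ.toJordanDecomposition.negPart

section Helpers

variable {d : ℕ}

local notation "𝔼" => EuclideanSpace ℝ (Fin d)

/-- The doubly mollified kernel. -/
def dblMoll (w ψ : EuclideanSpace ℝ (Fin d) → ℝ)
    (q : EuclideanSpace ℝ (Fin d) × EuclideanSpace ℝ (Fin d)) : ℝ :=
  ∫ p : EuclideanSpace ℝ (Fin d) × EuclideanSpace ℝ (Fin d),
    w (p.1 - p.2) * (ψ (p.1 - q.1) * ψ (p.2 - q.2))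

lemma integrable_diff_ball {w : EuclideanSpace ℝ (Fin d) → ℝ} (hw : Measurable w)
    (hloc : LocallyIntegrable w volume) (r : ℝ) :
    Integrable (fun p : 𝔼 × 𝔼 => w (p.1 - p.2) *
      ((closedBall (0 : 𝔼) r).indicator (fun _ => (1 : ℝ)) p.1 *
        (closedBall (0 : 𝔼) r).indicator (fun _ => (1 : ℝ)) p.2)) (volume.prod volume) := by
  have hB : MeasurableSet (closedBall (0 : 𝔼) r) := measurableSet_closedBall
  have h1 : Integrable ((closedBall (0 : 𝔼) (r + r)).indicator w) volume := by
    rw [integrable_indicator_iff measurableSet_closedBall]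
    exact hloc.integrableOn_isCompact (isCompact_closedBall _ _)
  have h2 : Integrable ((closedBall (0 : 𝔼) r).indicator (fun _ => (1 : ℝ))) volume := by
    rw [integrable_indicator_iff hB]
    exact integrableOn_const (isCompact_closedBall _ _).measure_lt_top.ne
  have h3 := h1.mul_prod h2
  have h4 := (measurePreserving_sub_prod (volume : Measure 𝔼) (volume : Measure 𝔼)).integrable_comp_of_integrable h3
  refine Integrable.mono h4 ?_ ?_
  · apply Measurable.aestronglyMeasurable
    have : Measurable ((closedBall (0 : 𝔼) r).indicator (fun _ => (1 : ℝ))) :=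
      measurable_const.indicator hB
    fun_prop
  · refine Eventually.of_forall fun p => ?_
    by_cases hp1 : p.1 ∈ closedBall (0 : 𝔼) r
    · by_cases hp2 : p.2 ∈ closedBall (0 : 𝔼) r
      · have : p.1 - p.2 ∈ closedBall (0 : 𝔼) (r + r) := by
          simp only [mem_closedBall, dist_zero_right] at *
          exact (norm_sub_le _ _).trans (add_le_add hp1 hp2)
        simp [hp1, hp2, this]
      · simp [hp2]
    · simp only [indicator_of_notMem hp1, zero_mul, mul_zero, norm_zero]
      positivity

lemma integrable_quad {w ψ : EuclideanSpace ℝ (Fin d) → ℝ} (hw : Measurable w)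
    (hloc : LocallyIntegrable w volume) (hψc : Continuous ψ) {ε c : ℝ}
    (hψ0 : ∀ x, 0 ≤ ψ x) (hψb : ∀ x, ψ x ≤ c)
    (hψs : ∀ x, ε < ‖x‖ → ψ x = 0)
    (α β : Measure (EuclideanSpace ℝ (Fin d))) [IsFiniteMeasure α] [IsFiniteMeasure β]
    {L : ℝ} (hα : ∀ᵐ x ∂α, ‖x‖ ≤ L) (hβ : ∀ᵐ x ∂β, ‖x‖ ≤ L) :
    Integrable (fun s : (𝔼 × 𝔼) × (𝔼 × 𝔼) =>
      w (s.1.1 - s.1.2) * (ψ (s.1.1 - s.2.1) * ψ (s.1.2 - s.2.2)))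
      ((volume.prod volume).prod (α.prod β)) := by
  have h1 := (integrable_diff_ball hw hloc (L + ε)).mul_prod
    (integrable_const (μ := α.prod β) (c * c))
  refine Integrable.mono h1 ?_ ?_
  · apply Measurable.aestronglyMeasurable
    have := hψc.measurable
    fun_prop
  · have hc : 0 ≤ c := (hψ0 0).trans (hψb 0)
    have ha : ∀ᵐ q ∂(α.prod β), ‖q.1‖ ≤ L := Measure.quasiMeasurePreserving_fst.ae hα
    have hb : ∀ᵐ q ∂(α.prod β), ‖q.2‖ ≤ L := Measure.quasiMeasurePreserving_snd.ae hβ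
    have hab : ∀ᵐ s ∂((volume : Measure (𝔼 × 𝔼)).prod (α.prod β)), ‖s.2.1‖ ≤ L ∧ ‖s.2.2‖ ≤ L :=
      Measure.quasiMeasurePreserving_snd.ae (ha.and hb)
    filter_upwards [hab] with s hs
    have key : ∀ x y : 𝔼, ‖y‖ ≤ L →
        ψ (x - y) ≤ c * (closedBall (0 : 𝔼) (L + ε)).indicator (fun _ => (1 : ℝ)) x := by
      intro x y hy
      by_cases hx : x ∈ closedBall (0 : 𝔼) (L + ε)
      · simpa [hx] using hψb _
      · have : ψ (x - y) = 0 := by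
          apply hψs
          simp only [mem_closedBall, dist_zero_right, not_le] at hx
          have := norm_sub_norm_le x y
          linarith
        simp [hx, this]
    have k1 := key s.1.1 s.2.1 hs.1
    have k2 := key s.1.2 s.2.2 hs.2
    have i0 : ∀ x : 𝔼, 0 ≤ (closedBall (0 : 𝔼) (L + ε)).indicator (fun _ => (1 : ℝ)) x :=
      fun x => indicator_nonneg (fun _ _ => zero_le_one) x
    have i1 := i0 s.1.1
    have i2 := i0 s.1.2
    simp only [norm_mul, Real.norm_eq_abs, abs_of_nonneg (hψ0 _), abs_of_nonneg i1,
      abs_of_nonneg i2, abs_of_nonneg hc]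
    calc _ ≤ |w (s.1.1 - s.1.2)| * ((c * (closedBall (0 : 𝔼) (L + ε)).indicator (fun _ => (1 : ℝ)) s.1.1) * (c * (closedBall (0 : 𝔼) (L + ε)).indicator (fun _ => (1 : ℝ)) s.1.2)) := by
          gcongr
          · exact hψ0 _
      _ = _ := by ring

lemma fubini_quad {w ψ : EuclideanSpace ℝ (Fin d) → ℝ} (hw : Measurable w)
    (hloc : LocallyIntegrable w volume) (hψc : Continuous ψ) {ε c : ℝ}
    (hψ0 : ∀ x, 0 ≤ ψ x) (hψb : ∀ x, ψ x ≤ c)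
    (hψs : ∀ x, ε < ‖x‖ → ψ x = 0)
    (α β : Measure (EuclideanSpace ℝ (Fin d))) [IsFiniteMeasure α] [IsFiniteMeasure β]
    {L : ℝ} (hα : ∀ᵐ x ∂α, ‖x‖ ≤ L) (hβ : ∀ᵐ x ∂β, ‖x‖ ≤ L) :
    Integrable (fun p : 𝔼 × 𝔼 => w (p.1 - p.2) *
      ((∫ y, ψ (p.1 - y) ∂α) * (∫ y, ψ (p.2 - y) ∂β))) ∧
    Integrable (dblMoll w ψ) (α.prod β) ∧
    ∫ p : 𝔼 × 𝔼, w (p.1 - p.2) * ((∫ y, ψ (p.1 - y) ∂α) * (∫ y, ψ (p.2 - y) ∂β)) =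
      ∫ q, dblMoll w ψ q ∂(α.prod β) := by
  have h := integrable_quad hw hloc hψc hψ0 hψb hψs α β hα hβ
  have e : ∀ p : 𝔼 × 𝔼, w (p.1 - p.2) * ((∫ y, ψ (p.1 - y) ∂α) * (∫ y, ψ (p.2 - y) ∂β)) =
      ∫ q, w (p.1 - p.2) * (ψ (p.1 - q.1) * ψ (p.2 - q.2)) ∂(α.prod β) := by
    intro p
    rw [integral_const_mul, integral_prod_mul (fun y => ψ (p.1 - y)) (fun y => ψ (p.2 - y))]
  simp_rw [e]
  refine ⟨h.integral_prod_left, h.integral_prod_right, ?_⟩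
  exact integral_integral_swap (μ := (volume : Measure (𝔼 × 𝔼))) h

lemma integrable_pt {w ψ : EuclideanSpace ℝ (Fin d) → ℝ} (hw : Measurable w)
    (hloc : LocallyIntegrable w volume) (hψc : Continuous ψ) {ε c : ℝ}
    (hψ0 : ∀ x, 0 ≤ ψ x) (hψb : ∀ x, ψ x ≤ c)
    (hψs : ∀ x, ε < ‖x‖ → ψ x = 0) (q : 𝔼 × 𝔼) :
    Integrable (fun p : 𝔼 × 𝔼 => w (p.1 - p.2) * (ψ (p.1 - q.1) * ψ (p.2 - q.2))) := by
  have := (fubini_quad hw hloc hψc hψ0 hψb hψs (Measure.dirac q.1) (Measure.dirac q.2)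
    (L := max ‖q.1‖ ‖q.2‖) (by simp [ae_dirac_eq]) (by simp [ae_dirac_eq])).1
  simpa using this

lemma integrable_psi {ψ : EuclideanSpace ℝ (Fin d) → ℝ} (hψc : Continuous ψ) {ε : ℝ}
    (hψs : ∀ x, ε < ‖x‖ → ψ x = 0) : Integrable ψ := by
  apply hψc.integrable_of_hasCompactSupport
  apply HasCompactSupport.intro (isCompact_closedBall (0 : 𝔼) ε)
  intro x hx
  apply hψs
  simpa using hx

lemma dblMoll_bound {w ψ : EuclideanSpace ℝ (Fin d) → ℝ} (hw : Measurable w)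
    (hloc : LocallyIntegrable w volume) (hψc : Continuous ψ) {ε c : ℝ} (hε : 0 < ε)
    (hψ0 : ∀ x, 0 ≤ ψ x) (hψb : ∀ x, ψ x ≤ c)
    (hψs : ∀ x, ε < ‖x‖ → ψ x = 0) (hψi : ∫ x, ψ x = 1) (q : 𝔼 × 𝔼) :
    |dblMoll w ψ q| ≤ c * ∫ y in ball (q.1 - q.2) (3 * ε), |w y| := by
  have hc : 0 ≤ c := (hψ0 0).trans (hψb 0)
  have hI := (integrable_pt hw hloc hψc hψ0 hψb hψs q).abs
  have hψI := integrable_psi hψc hψs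
  have hlocB : ∀ z : 𝔼, IntegrableOn (fun y => |w y|) (ball z (3 * ε)) := fun z =>
    ((hloc.integrableOn_isCompact (isCompact_closedBall z (3*ε))).mono_set
      ball_subset_closedBall).abs
  set J := ∫ y in ball (q.1 - q.2) (3 * ε), |w y| with hJ
  calc |dblMoll w ψ q| ≤ ∫ p : 𝔼 × 𝔼, |w (p.1 - p.2) * (ψ (p.1 - q.1) * ψ (p.2 - q.2))| :=
        abs_integral_le_integral_abs
    _ = ∫ y, ∫ x, |w (x - y) * (ψ (x - q.1) * ψ (y - q.2))| := integral_prod_symm _ hI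
    _ ≤ ∫ y, ψ (y - q.2) * (c * J) := by
        refine integral_mono hI.integral_prod_right
          ((hψI.comp_sub_right q.2).mul_const _) fun y => ?_
        dsimp only
        by_cases hy : ε < ‖y - q.2‖
        · simp [hψs _ hy]
        push Not at hy
        have e1 : ∀ x, |w (x - y) * (ψ (x - q.1) * ψ (y - q.2))| =
            ψ (y - q.2) * (|w (x - y)| * ψ (x - q.1)) := by
          intro x
          rw [abs_mul, abs_mul, abs_of_nonneg (hψ0 _), abs_of_nonneg (hψ0 _)]; ring
        simp_rw [e1]
        rw [integral_const_mul]
        refine mul_le_mul_of_nonneg_left ?_ (hψ0 _)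
        have e2 : ∫ x, |w (x - y)| * ψ (x - q.1) = ∫ x, |w x| * ψ (x + y - q.1) := by
          rw [← integral_sub_right_eq_self (fun x => |w x| * ψ (x + y - q.1)) y]
          simp
        rw [e2, hJ, ← integral_indicator measurableSet_ball, ← integral_const_mul]
        refine integral_mono_of_nonneg (Eventually.of_forall fun x =>
          mul_nonneg (abs_nonneg _) (hψ0 _)) ?_ (Eventually.of_forall fun x => ?_)
        · exact ((integrable_indicator_iff measurableSet_ball).2 (hlocB _)).const_mul _
        · dsimp only
          by_cases hx : x ∈ ball (q.1 - q.2) (3 * ε)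
          · rw [indicator_of_mem hx, mul_comm]
            exact mul_le_mul_of_nonneg_right (hψb _) (abs_nonneg _)
          · rw [indicator_of_notMem hx, hψs]
            · simp
            · simp only [mem_ball, dist_eq_norm, not_lt] at hx
              have e3 : x + y - q.1 = (x - (q.1 - q.2)) + (y - q.2) := by abel
              have := norm_sub_norm_le (x - (q.1 - q.2)) (-(y - q.2))
              rw [norm_neg, sub_neg_eq_add, ← e3] at this
              linarith
    _ = c * J := by
        rw [integral_mul_const, integral_sub_right_eq_self ψ q.2, hψi, one_mul]

lemma dblMoll_close {w ψ : EuclideanSpace ℝ (Fin d) → ℝ} (hw : Measurable w)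
    (hloc : LocallyIntegrable w volume) (hψc : Continuous ψ) {ε c : ℝ} (hε : 0 < ε)
    (hψ0 : ∀ x, 0 ≤ ψ x) (hψb : ∀ x, ψ x ≤ c)
    (hψs : ∀ x, ε < ‖x‖ → ψ x = 0) (hψi : ∫ x, ψ x = 1) (q : 𝔼 × 𝔼) {δ : ℝ}
    (hδ : ∀ y ∈ ball (q.1 - q.2) (3 * ε), |w y - w (q.1 - q.2)| ≤ δ) :
    |dblMoll w ψ q - w (q.1 - q.2)| ≤ δ := by
  have hI := integrable_pt hw hloc hψc hψ0 hψb hψs q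
  have hψI := integrable_psi hψc hψs
  have hP : Integrable (fun p : 𝔼 × 𝔼 => ψ (p.1 - q.1) * ψ (p.2 - q.2)) :=
    (hψI.comp_sub_right q.1).mul_prod (hψI.comp_sub_right q.2)
  have hP1 : ∫ p : 𝔼 × 𝔼, ψ (p.1 - q.1) * ψ (p.2 - q.2) = 1 := by
    have := integral_prod_mul (μ := (volume : Measure 𝔼)) (ν := (volume : Measure 𝔼))
      (fun x => ψ (x - q.1)) (fun x => ψ (x - q.2))
    rw [integral_sub_right_eq_self ψ, integral_sub_right_eq_self ψ, hψi, one_mul] at this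
    exact this
  have e : dblMoll w ψ q - w (q.1 - q.2) =
      ∫ p : 𝔼 × 𝔼, (w (p.1 - p.2) - w (q.1 - q.2)) * (ψ (p.1 - q.1) * ψ (p.2 - q.2)) := by
    simp_rw [sub_mul (w _)]
    rw [integral_sub hI (hP.const_mul _), integral_const_mul, hP1, mul_one, dblMoll]
  rw [e]
  calc _ ≤ ∫ p : 𝔼 × 𝔼, |(w (p.1 - p.2) - w (q.1 - q.2)) * (ψ (p.1 - q.1) * ψ (p.2 - q.2))| :=
        abs_integral_le_integral_abs
    _ ≤ ∫ p : 𝔼 × 𝔼, δ * (ψ (p.1 - q.1) * ψ (p.2 - q.2)) := by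
        refine integral_mono_of_nonneg (Eventually.of_forall fun x => abs_nonneg _)
          (hP.const_mul _) (Eventually.of_forall fun p => ?_)
        dsimp only
        have hnn := mul_nonneg (hψ0 (p.1 - q.1)) (hψ0 (p.2 - q.2))
        rw [abs_mul, abs_of_nonneg hnn]
        by_cases h1 : ε < ‖p.1 - q.1‖
        · simp [hψs _ h1]
        by_cases h2 : ε < ‖p.2 - q.2‖
        · simp [hψs _ h2]
        refine mul_le_mul_of_nonneg_right (hδ _ ?_) hnn
        push Not at h1 h2
        rw [mem_ball, dist_eq_norm]
        have e3 : p.1 - p.2 - (q.1 - q.2) = (p.1 - q.1) - (p.2 - q.2) := by abel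
        rw [e3]
        have := norm_sub_le (p.1 - q.1) (p.2 - q.2)
        linarith
    _ = δ := by rw [integral_const_mul, hP1, mul_one]

lemma moll_props {φ : EuclideanSpace ℝ (Fin d) → ℝ} (hφc : Continuous φ)
    (hφpos : ∀ x, 0 ≤ φ x)
    (hφsupp : tsupport φ ⊆ closedBall (0 : EuclideanSpace ℝ (Fin d)) 1)
    (hφint : ∫ x, φ x = 1) {M : ℝ} (hM : ∀ x, φ x ≤ M) {ε : ℝ} (hε : 0 < ε) :
    Continuous (fun x : 𝔼 => ε ^ (-(d:ℝ)) * φ (ε⁻¹ • x)) ∧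
    (∀ x : 𝔼, 0 ≤ ε ^ (-(d:ℝ)) * φ (ε⁻¹ • x)) ∧
    (∀ x : 𝔼, ε ^ (-(d:ℝ)) * φ (ε⁻¹ • x) ≤ ε ^ (-(d:ℝ)) * M) ∧
    (∀ x : 𝔼, ε < ‖x‖ → ε ^ (-(d:ℝ)) * φ (ε⁻¹ • x) = 0) ∧
    ∫ x : 𝔼, ε ^ (-(d:ℝ)) * φ (ε⁻¹ • x) = 1 := by
  have hp : 0 < ε ^ (-(d:ℝ)) := Real.rpow_pos_of_pos hε _
  refine ⟨by fun_prop, fun x => mul_nonneg hp.le (hφpos _),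
    fun x => mul_le_mul_of_nonneg_left (hM _) hp.le, fun x hx => ?_, ?_⟩
  · rw [image_eq_zero_of_notMem_tsupport (f := φ), mul_zero]
    intro h
    have := hφsupp h
    rw [mem_closedBall, dist_zero_right, norm_smul, norm_inv, Real.norm_of_nonneg hε.le,
      inv_mul_le_iff₀ hε] at this
    linarith
  · rw [integral_const_mul, Measure.integral_comp_inv_smul_of_nonneg volume φ hε.le, hφint,
      finrank_euclideanSpace_fin, Real.rpow_neg hε.le, Real.rpow_natCast]
    simp only [smul_eq_mul, mul_one]
    exact inv_mul_cancel₀ (pow_pos hε _).ne'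


lemma pair_tendsto {w φ : EuclideanSpace ℝ (Fin d) → ℝ} (hw : Measurable w)
    (hloc : LocallyIntegrable w volume) (hφc : Continuous φ)
    (hφpos : ∀ x, 0 ≤ φ x)
    (hφsupp : tsupport φ ⊆ closedBall (0 : EuclideanSpace ℝ (Fin d)) 1)
    (hφint : ∫ x, φ x = 1) {M : ℝ} (hM : ∀ x, φ x ≤ M)
    (α β : Measure (EuclideanSpace ℝ (Fin d))) [IsFiniteMeasure α] [IsFiniteMeasure β]
    {L : ℝ} (hα : ∀ᵐ x ∂α, ‖x‖ ≤ L) (hβ : ∀ᵐ x ∂β, ‖x‖ ≤ L)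
    (G : Set (EuclideanSpace ℝ (Fin d)))
    (hG : ∀ᵐ q ∂(α.prod β), q.1 - q.2 ∈ G) (hGc : ∀ z ∈ G, ContinuousAt w z)
    (hint : Integrable (fun q : 𝔼 × 𝔼 => w (q.1 - q.2)) (α.prod β))
    {A B : ℝ} (hdom : ∀ z ∈ G, ‖z‖ ≤ 2 * L → ∀ r, 0 < r → r < 1 →
      ∫ y in ball z r, |w y| ≤ (volume (ball z r)).toReal * (A + B * |w z|)) :
    Tendsto (fun ε : ℝ => ∫ p : 𝔼 × 𝔼, w (p.1 - p.2) *
      ((∫ y, ε ^ (-(d:ℝ)) * φ (ε⁻¹ • (p.1 - y)) ∂α) *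
       (∫ y, ε ^ (-(d:ℝ)) * φ (ε⁻¹ • (p.2 - y)) ∂β)))
      (nhdsWithin 0 (Ioi (0:ℝ))) (nhds (∫ q, w (q.1 - q.2) ∂(α.prod β))) := by
  have hM0 : 0 ≤ M := (hφpos 0).trans (hM 0)
  have hpos : ∀ᶠ ε in nhdsWithin 0 (Ioi (0:ℝ)), 0 < ε := eventually_mem_nhdsWithin
  have hsm : ∀ η : ℝ, 0 < η → ∀ᶠ ε in nhdsWithin 0 (Ioi (0:ℝ)), ε < η := fun η hη =>
    eventually_nhdsWithin_of_eventually_nhds (eventually_lt_nhds hη)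
  have hgoal : Tendsto (fun ε : ℝ =>
      ∫ q, dblMoll w (fun x : 𝔼 => ε ^ (-(d:ℝ)) * φ (ε⁻¹ • x)) q ∂(α.prod β))
      (nhdsWithin 0 (Ioi (0:ℝ))) (nhds (∫ q, w (q.1 - q.2) ∂(α.prod β))) := by
    set V := (volume (ball (0 : 𝔼) 1)).toReal with hV
    refine tendsto_integral_filter_of_dominated_convergence
      (fun q => M * (3 ^ d * V) * (A + B * |w (q.1 - q.2)|)) ?_ ?_ ?_ ?_
    · filter_upwards [hpos] with ε hε
      obtain ⟨h1, h2, h3, h4, h5⟩ := moll_props hφc hφpos hφsupp hφint hM hε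
      exact (fubini_quad hw hloc h1 h2 h3 h4 α β hα hβ).2.1.aestronglyMeasurable
    · filter_upwards [hpos, hsm (1/3) (by norm_num)] with ε hε hε3
      obtain ⟨h1, h2, h3, h4, h5⟩ := moll_props hφc hφpos hφsupp hφint hM hε
      have ha : ∀ᵐ q ∂(α.prod β), ‖q.1‖ ≤ L := Measure.quasiMeasurePreserving_fst.ae hα
      have hb : ∀ᵐ q ∂(α.prod β), ‖q.2‖ ≤ L := Measure.quasiMeasurePreserving_snd.ae hβ
      filter_upwards [ha, hb, hG] with q hq1 hq2 hq
      have hb1 := dblMoll_bound hw hloc h1 hε h2 h3 h4 h5 q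
      have hz : ‖q.1 - q.2‖ ≤ 2 * L := by
        have := norm_sub_le q.1 q.2
        linarith
      have hb2 := hdom _ hq hz (3 * ε) (by linarith) (by linarith)
      have hvol : (volume (ball (q.1 - q.2) (3 * ε))).toReal = (3 * ε) ^ d * V := by
        rw [Measure.addHaar_ball_of_pos _ _ (by positivity), ENNReal.toReal_mul,
          ENNReal.toReal_ofReal (by positivity), finrank_euclideanSpace_fin]
      rw [hvol] at hb2
      have hp : 0 < ε ^ (-(d:ℝ)) := Real.rpow_pos_of_pos hε _
      have hcancel : ε ^ (-(d:ℝ)) * ε ^ d = 1 := by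
        rw [Real.rpow_neg hε.le, Real.rpow_natCast]
        exact inv_mul_cancel₀ (pow_pos hε _).ne'
      rw [Real.norm_eq_abs]
      calc _ ≤ _ := hb1
        _ ≤ ε ^ (-(d:ℝ)) * M * ((3 * ε) ^ d * V * (A + B * |w (q.1 - q.2)|)) := by
            gcongr
        _ = (ε ^ (-(d:ℝ)) * ε ^ d) * (M * (3 ^ d * V) * (A + B * |w (q.1 - q.2)|)) := by
            rw [mul_pow]; ring
        _ = _ := by rw [hcancel, one_mul]
    · exact ((integrable_const A).add (hint.abs.const_mul B)).const_mul _
    · filter_upwards [hG] with q hq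
      have hc := hGc _ hq
      rw [Metric.tendsto_nhds]
      intro δ hδ
      obtain ⟨η, hη, hηb⟩ := Metric.continuousAt_iff.1 hc (δ / 2) (by positivity)
      filter_upwards [hpos, hsm (η / 3) (by positivity)] with ε hε hε3
      obtain ⟨h1, h2, h3, h4, h5⟩ := moll_props hφc hφpos hφsupp hφint hM hε
      have := dblMoll_close hw hloc h1 hε h2 h3 h4 h5 q (δ := δ / 2) (by
        intro y hy
        have hy' : dist y (q.1 - q.2) < η := by
          rw [mem_ball] at hy
          linarith
        have := hηb hy'
        rw [Real.dist_eq] at this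
        exact this.le)
      rw [Real.dist_eq]
      linarith
  refine hgoal.congr' ?_
  filter_upwards [hpos] with ε hε
  obtain ⟨h1, h2, h3, h4, h5⟩ := moll_props hφc hφpos hφsupp hφint hM hε
  exact (fubini_quad hw hloc h1 h2 h3 h4 α β hα hβ).2.2.symm

end Helpers

/-- If `W` satisfies (W0-w) and (W1) and `μ` is a compactly supported signed measure
with `E[|μ|] < ∞`, then `E[μ * φ_ε] → E[μ]` as `ε → 0⁺`, for any mollifier `φ`. -/
theorem mollified_energy_tendsto
    {d : ℕ} (hd : 0 < d) (W : EuclideanSpace ℝ (Fin d) → EReal)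
    (heven : ∀ x, W (-x) = W x)
    (hlsc : LowerSemicontinuous W)
    (hloc : LocallyIntegrable (fun x => (W x).toReal) volume)
    (hbddcpt : ∀ K : Set (EuclideanSpace ℝ (Fin d)), IsCompact K →
      ∃ m : ℝ, ∀ x ∈ K, (m : EReal) ≤ W x)
    (hcont : ContinuousOn W {(0 : EuclideanSpace ℝ (Fin d))}ᶜ)
    (hW0 : Tendsto W (nhdsWithin 0 {(0 : EuclideanSpace ℝ (Fin d))}ᶜ) (nhds (W 0)))
    (hmoll : ∀ R : ℝ, 0 < R → ∃ C₁ C₂ : ℝ,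
      ∀ x : EuclideanSpace ℝ (Fin d), ‖x‖ < R → ∀ ε : ℝ, 0 < ε → ε < 1 →
        ((((volume (ball x ε)).toReal)⁻¹ *
            ∫ y in ball x ε, (W y).toReal : ℝ) : EReal) ≤ (C₁ : EReal) + (C₂ : EReal) * W x)
    (φ : EuclideanSpace ℝ (Fin d) → ℝ)
    (hφsmooth : ContDiff ℝ (⊤ : ℕ∞) φ) (hφpos : ∀ x, 0 ≤ φ x)
    (hφsupp : tsupport φ ⊆ closedBall (0 : EuclideanSpace ℝ (Fin d)) 1)
    (hφrad : ∀ x y : EuclideanSpace ℝ (Fin d), ‖x‖ ≤ ‖y‖ → φ y ≤ φ x)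
    (hφint : ∫ x, φ x = 1)
    (μ : SignedMeasure (EuclideanSpace ℝ (Fin d)))
    (hμcpt : ∃ K : Set (EuclideanSpace ℝ (Fin d)), IsCompact K ∧ μ.totalVariation Kᶜ = 0)
    (hμE : interactionEnergy W μ.totalVariation < ⊤) :
    Tendsto (fun ε : ℝ => densityEnergy W (mollifiedSigned φ μ ε))
      (nhdsWithin 0 (Ioi (0:ℝ))) (nhds (signedEnergy W μ)) := by
  classical
  set w : EuclideanSpace ℝ (Fin d) → ℝ := fun x => (W x).toReal with hwdef
  have hWm : Measurable W := hlsc.measurable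
  have hw : Measurable w := measurable_ereal_toReal.comp hWm
  have hφc : Continuous φ := hφsmooth.continuous
  have hM : ∀ x, φ x ≤ φ 0 := fun x => hφrad 0 x (by simp)
  have hbot : ∀ x, W x ≠ ⊥ := by
    intro x hx
    obtain ⟨m, hm⟩ := hbddcpt {x} isCompact_singleton
    have := hm x rfl
    rw [hx] at this
    exact (EReal.bot_lt_coe m).not_ge this
  -- continuity at points of finiteness
  have hWc : ∀ z, ContinuousAt W z := by
    intro z
    by_cases hz : z = 0
    · subst hz
      exact continuousWithinAt_compl_self.1 hW0
    · exact hcont.continuousAt (isOpen_compl_singleton.mem_nhds hz)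
  have hGc : ∀ z ∈ {z | W z ≠ ⊤}, ContinuousAt w z := fun z hz =>
    ContinuousAt.comp (EReal.tendsto_toReal hz (hbot z)) (hWc z)
  obtain ⟨K, hK, hKμ⟩ := hμcpt
  obtain ⟨L, hL0, hL⟩ : ∃ L : ℝ, 0 < L ∧ ∀ x ∈ K, ‖x‖ ≤ L := by
    obtain ⟨L, hL⟩ := hK.isBounded.exists_norm_le
    exact ⟨max L 1, by positivity, fun x hx => (hL x hx).trans (le_max_left _ _)⟩
  set T := μ.totalVariation with hT
  set P := μ.toJordanDecomposition.posPart with hP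
  set N := μ.toJordanDecomposition.negPart with hN
  have hTPN : T = P + N := rfl
  have : IsFiniteMeasure T := by rw [hTPN]; infer_instance
  have hPT : P ≤ T := by rw [hTPN]; exact Measure.le_add_right le_rfl
  have hNT : N ≤ T := by rw [hTPN]; exact Measure.le_add_left le_rfl
  have hTL : ∀ᵐ x ∂T, ‖x‖ ≤ L := by
    have : ∀ᵐ x ∂T, x ∈ K := hKμ
    filter_upwards [this] with x hx using hL x hx
  have hPL : ∀ᵐ x ∂P, ‖x‖ ≤ L := ae_mono hPT hTL
  have hNL : ∀ᵐ x ∂N, ‖x‖ ≤ L := ae_mono hNT hTL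
  -- lower bound
  obtain ⟨m, hm⟩ := hbddcpt (closedBall 0 (2 * L + 1)) (isCompact_closedBall _ _)
  have hwm : ∀ x ∈ closedBall (0 : EuclideanSpace ℝ (Fin d)) (2 * L + 1), -|m| ≤ w x := by
    intro x hx
    by_cases ht : W x = ⊤
    · simp [hwdef, ht]
    · have h1 := hm x hx
      rw [← EReal.coe_toReal ht (hbot x)] at h1
      exact (neg_abs_le m).trans (EReal.coe_le_coe_iff.1 h1)
  obtain ⟨C₁, C₂, hC⟩ := hmoll (2 * L + 1) (by linarith)
  have hdom : ∀ z ∈ {z | W z ≠ ⊤}, ‖z‖ ≤ 2 * L → ∀ r, 0 < r → r < 1 →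
      ∫ y in ball z r, |w y| ≤
        (volume (ball z r)).toReal * ((|C₁| + 2 * |m|) + |C₂| * |w z|) := by
    intro z hz hzL r hr hr1
    have h1 := hC z (by linarith) r hr hr1
    rw [← EReal.coe_toReal hz (hbot z)] at h1
    norm_cast at h1
    have hvpos : 0 < (volume (ball z r)).toReal :=
      ENNReal.toReal_pos (measure_ball_pos _ _ hr).ne' measure_ball_lt_top.ne
    have hwi : IntegrableOn w (ball z r) :=
      (hloc.integrableOn_isCompact (isCompact_closedBall z r)).mono_set ball_subset_closedBall
    have h2 : ∫ y in ball z r, |w y| ≤ ∫ y in ball z r, (w y + 2 * |m|) := by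
      refine setIntegral_mono_on hwi.abs (hwi.add
        (integrableOn_const measure_ball_lt_top.ne)) measurableSet_ball fun y hy => ?_
      have hy' : y ∈ closedBall (0 : EuclideanSpace ℝ (Fin d)) (2 * L + 1) := by
        rw [mem_ball, dist_eq_norm] at hy
        rw [mem_closedBall, dist_zero_right]
        have := norm_sub_norm_le y z
        linarith
      have := hwm y hy'
      have := abs_nonneg m
      rw [abs_le]
      constructor <;> linarith
    rw [integral_add hwi (integrableOn_const measure_ball_lt_top.ne), setIntegral_const] at h2
    have h3 : ∫ y in ball z r, w y ≤ (volume (ball z r)).toReal * (C₁ + C₂ * w z) := by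
      rwa [inv_mul_le_iff₀ hvpos] at h1
    have h4 : C₁ + C₂ * w z ≤ |C₁| + |C₂| * |w z| := by
      rw [← abs_mul]
      exact add_le_add (le_abs_self _) (le_abs_self _)
    have h5 := mul_le_mul_of_nonneg_left h4 hvpos.le
    simp only [Measure.real, smul_eq_mul] at h2
    linarith
  -- finiteness of the energy
  have hTT : ∀ᵐ q ∂(T.prod T), q.1 - q.2 ∈ closedBall (0 : EuclideanSpace ℝ (Fin d)) (2 * L + 1) := by
    have ha : ∀ᵐ q ∂(T.prod T), ‖q.1‖ ≤ L := Measure.quasiMeasurePreserving_fst.ae hTL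
    have hb : ∀ᵐ q ∂(T.prod T), ‖q.2‖ ≤ L := Measure.quasiMeasurePreserving_snd.ae hTL
    filter_upwards [ha, hb] with q h1 h2
    rw [mem_closedBall, dist_zero_right]
    have := norm_sub_le q.1 q.2
    linarith
  have hneg : ∫⁻ p, erealToENNReal (-(W (p.1 - p.2))) ∂(T.prod T) ≠ ⊤ := by
    refine ne_top_of_le_ne_top (b := ∫⁻ p, ENNReal.ofReal |m| ∂(T.prod T)) ?_ ?_
    · rw [lintegral_const]
      exact ENNReal.mul_ne_top ENNReal.ofReal_ne_top (measure_ne_top _ _)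
    · refine lintegral_mono_ae ?_
      filter_upwards [hTT] with q hq
      have h1 : -W (q.1 - q.2) ≠ ⊤ := by
        rw [Ne, EReal.neg_eq_top_iff]; exact hbot _
      rw [erealToENNReal, if_neg h1, EReal.toReal_neg_eq]
      apply ENNReal.ofReal_le_ofReal
      have := hwm _ hq
      simp only [hwdef] at this
      linarith
  have hposI : ∫⁻ p, erealToENNReal (W (p.1 - p.2)) ∂(T.prod T) ≠ ⊤ := by
    intro h
    rw [interactionEnergy, h, ennrealToEReal, ennrealToEReal, if_pos rfl, if_neg hneg,
      EReal.top_sub_coe, EReal.coe_mul_top_of_pos (by norm_num)] at hμE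
    exact lt_irrefl _ hμE
  have heM : Measurable erealToENNReal := by
    unfold erealToENNReal
    exact Measurable.ite (measurableSet_singleton _) measurable_const
      (ENNReal.measurable_ofReal.comp measurable_ereal_toReal)
  have hsubm : Measurable (fun p : EuclideanSpace ℝ (Fin d) × EuclideanSpace ℝ (Fin d) =>
      p.1 - p.2) := by fun_prop
  have hGT : ∀ᵐ q ∂(T.prod T), q.1 - q.2 ∈ {z | W z ≠ ⊤} := by
    have := ae_lt_top (heM.comp (hWm.comp hsubm)) hposI
    filter_upwards [this] with q hq h
    simp only [Function.comp, erealToENNReal, h, if_true] at hq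
    exact lt_irrefl _ hq
  have hintT : Integrable (fun q : EuclideanSpace ℝ (Fin d) × EuclideanSpace ℝ (Fin d) =>
      w (q.1 - q.2)) (T.prod T) := by
    refine ⟨(hw.comp hsubm).aestronglyMeasurable, ?_⟩
    rw [hasFiniteIntegral_iff_norm]
    refine lt_of_le_of_lt (lintegral_mono_ae (g := fun p => erealToENNReal (W (p.1 - p.2)) +
      ENNReal.ofReal (2 * |m|)) ?_) ?_
    · filter_upwards [hTT, hGT] with q hq hq2
      rw [erealToENNReal, if_neg hq2]
      refine le_trans ?_ ENNReal.ofReal_add_le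
      apply ENNReal.ofReal_le_ofReal
      have h1 := hwm _ hq
      have := abs_nonneg m
      simp only [hwdef] at h1
      rw [Real.norm_eq_abs, abs_le]
      constructor <;> linarith
    · rw [lintegral_add_right _ measurable_const, lintegral_const]
      exact ENNReal.add_lt_top.2 ⟨hposI.lt_top, ENNReal.mul_lt_top ENNReal.ofReal_lt_top
        (measure_lt_top _ _)⟩
  -- the four limits
  have hlim : ∀ (α β : Measure (EuclideanSpace ℝ (Fin d))) [IsFiniteMeasure α]
      [IsFiniteMeasure β], α ≤ T → β ≤ T → _ := fun α β _ _ hα hβ =>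
    pair_tendsto hw hloc hφc hφpos hφsupp hφint hM α β (ae_mono hα hTL) (ae_mono hβ hTL)
      {z | W z ≠ ⊤} (ae_mono (Measure.prod_mono hα hβ) hGT) hGc
      (hintT.mono_measure (Measure.prod_mono hα hβ)) hdom
  have lPP := hlim P P hPT hPT
  have lPN := hlim P N hPT hNT
  have lNP := hlim N P hNT hPT
  have lNN := hlim N N hNT hNT
  have hswap : ∫ q, w (q.1 - q.2) ∂(N.prod P) = ∫ q, w (q.1 - q.2) ∂(P.prod N) := by
    rw [← integral_prod_swap]
    refine integral_congr_ae (Eventually.of_forall fun q => ?_)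
    simp only [hwdef, Prod.fst_swap, Prod.snd_swap]
    rw [← heven, neg_sub]
  have hfin := ((((lPP.sub lPN).sub lNP).add lNN).const_mul (2:ℝ)⁻¹)
  rw [hswap] at hfin
  have hval : signedEnergy W μ = (2:ℝ)⁻¹ * (∫ q, w (q.1 - q.2) ∂(P.prod P)
      - ∫ q, w (q.1 - q.2) ∂(P.prod N) - ∫ q, w (q.1 - q.2) ∂(P.prod N)
      + ∫ q, w (q.1 - q.2) ∂(N.prod N)) := by
    simp only [signedEnergy, ← hP, ← hN, hwdef]
    ring
  rw [hval]
  refine hfin.congr' ?_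
  filter_upwards [(eventually_mem_nhdsWithin : ∀ᶠ ε in nhdsWithin 0 (Ioi (0:ℝ)), 0 < ε)]
    with ε hε
  obtain ⟨h1, h2, h3, h4, h5⟩ := moll_props hφc hφpos hφsupp hφint hM hε
  have iPP := (fubini_quad hw hloc h1 h2 h3 h4 P P hPL hPL).1
  have iPN := (fubini_quad hw hloc h1 h2 h3 h4 P N hPL hNL).1
  have iNP := (fubini_quad hw hloc h1 h2 h3 h4 N P hNL hPL).1
  have iNN := (fubini_quad hw hloc h1 h2 h3 h4 N N hNL hNL).1
  have e1 := integral_sub iPP iPN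
  have e2 := integral_sub (iPP.sub iPN) iNP
  have e3 := integral_add ((iPP.sub iPN).sub iNP) iNN
  simp only [Pi.sub_apply] at e2 e3
  rw [densityEnergy, ← e1, ← e2, ← e3]
  congr 1
  refine integral_congr_ae (Eventually.of_forall fun p => ?_)
  simp only [mollifiedSigned, ← hP, ← hN, hwdef]
  ring

end
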